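/- arXiv:1601.06391 — 4 statements merged into one kernel-verified Lean document; each statement's English description precedes it below -/
import Mathlib

section
/- Let F be a finite field with q elements, b ∈ ℕ, and let M be a b × ℕ matrix over F of rank b, with pivot set {p_1 < p_2 < ... < p_b}. For c ∈ F^b let [c M] denote the b × ℕ matrix whose column 0 is c and whose column j+1 is column j of M. Then: (1) the set of c ∈ F^b for which the pivot set of [c M] equals {p+1 : p in the pivot set of M} is exactly {0}, so it has 1 element; and (2) for each j with 1 ≤ j ≤ b, the set of c ∈ F^b for which the pivot set of [c M] equals {0} ∪ {p+1 : p in the pivot set of M, p ≠ p_j} is exactly the set of vectors lying in the span of columns p_1, ..., p_j of M but not in the span of columns p_1, ..., p_{j−1}, and it has exactly q^j − q^{j−1} elements. -/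
open Matrix

/-- The pivot set of a matrix with columns indexed by `ℕ`: column `j` is pivotal
if it does not lie in the linear span of the columns with index strictly less than `j`. -/
def pivotSet {F : Type*} [Field F] {b : ℕ} (M : Matrix (Fin b) ℕ F) : Set ℕ :=
  {j | Mᵀ j ∉ Submodule.span F (Mᵀ '' Set.Iio j)}

/-- The matrix `[c M]` whose column `0` is `c` and whose column `j+1` is column `j` of `M`. -/
def prependCol {F : Type*} [Field F] {b : ℕ} (c : Fin b → F) (M : Matrix (Fin b) ℕ F) :
    Matrix (Fin b) ℕ F :=
  Matrix.of fun i j => match j with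
    | 0 => c i
    | j + 1 => M i j

/-!
Adjoining `c` to the left of a family `v` destroys a pivot `m` exactly when
`v m ∈ span (insert c (v '' Iio m))`, and by the exchange property this says that `c` lies in the
span of the entries up to `m` but not in the span of those before `m`. The spans of the initial
segments form a chain, so only one `m` has this property, and all other pivots survive. Pivots are
linearly independent and span the same initial segments as the whole family, which makes the
counting a matter of dimensions.
-/

open Set Submodule

section Pivots

variable (K : Type*) {V ι : Type*} [DivisionRing K] [AddCommGroup V] [Module K V] [LinearOrder ι]

/-- The pivots of a family of vectors: the indices whose vector is not in the span of the earlier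
ones, as in `pivotSet` but for any linearly ordered index type. -/
def pivots (v : ι → V) : Set ι :=
  {j | v j ∉ span K (v '' Iio j)}

/-- The pivots of a family that survive when `c` is placed before all of its vectors. The index set
is kept as it is, so the new vector itself gets no index. -/
def pivotsMod (c : V) (v : ι → V) : Set ι :=
  {j | v j ∉ span K (insert c (v '' Iio j))}

variable {K} {c : V} {v : ι → V} {k m : ι}

theorem pivotsMod_zero (v : ι → V) : pivotsMod K 0 v = pivots K v := by
  simp only [pivotsMod, pivots, span_insert_zero]

theorem pivotsMod_subset_pivots (c : V) (v : ι → V) : pivotsMod K c v ⊆ pivots K v :=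
  fun _ hk h ↦ hk (span_mono (subset_insert _ _) h)

theorem linearIndepOn_pivots (v : ι → V) : LinearIndepOn K v (pivots K v) := by
  refine linearIndepOn_iff_linearIndepOn_finset.2 fun t ↦ ?_
  induction t using Finset.induction_on_max with
  | empty => simp
  | insert m t hlt ih =>
    intro ht
    rw [Finset.coe_insert, insert_subset_iff] at ht
    rw [Finset.coe_insert]
    exact (ih ht.2).insert fun h ↦ ht.1 (span_mono (image_mono hlt) h)

theorem span_image_inter_pivots [WellFoundedLT ι] (v : ι → V) {s : Set ι} (hs : IsLowerSet s) :
    span K (v '' (s ∩ pivots K v)) = span K (v '' s) := by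
  refine (span_mono (image_mono inter_subset_left)).antisymm (span_le.2 ?_)
  rintro _ ⟨k, hk, rfl⟩
  induction k using WellFoundedLT.induction with
  | ind k ih =>
    by_cases hpiv : k ∈ pivots K v
    · exact subset_span (mem_image_of_mem v ⟨hk, hpiv⟩)
    · refine span_le.2 ?_ (not_not.1 hpiv)
      rintro _ ⟨l, hl, rfl⟩
      exact ih l hl (hs hl.le hk)

theorem span_comp_image_preimage [WellFoundedLT ι] {κ : Type*} {p : κ → ι}
    (hrange : range p = pivots K v) {s : Set ι} (hs : IsLowerSet s) :
    span K ((fun i ↦ v (p i)) '' (p ⁻¹' s)) = span K (v '' s) := by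
  rw [← image_image, image_preimage_eq_inter_range, hrange, span_image_inter_pivots v hs]

theorem mem_span_Iic_sdiff_of_notMem_pivotsMod (hk : k ∈ pivots K v)
    (hk' : k ∉ pivotsMod K c v) :
    c ∈ (span K (v '' Iic k) \ span K (v '' Iio k) : Set V) := by
  have hmem : v k ∈ span K (insert c (v '' Iio k)) := not_not.1 hk'
  refine ⟨?_, fun hc ↦ hk (span_insert_eq_span hc ▸ hmem)⟩
  rw [← Iio_insert, image_insert_eq]
  exact mem_span_insert_exchange hmem hk

theorem notMem_pivotsMod_of_mem_span_Iic_sdiff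
    (hc : c ∈ (span K (v '' Iic m) \ span K (v '' Iio m) : Set V)) :
    m ∉ pivotsMod K c v := by
  rw [← Iio_insert, image_insert_eq] at hc
  exact not_not.2 (mem_span_insert_exchange hc.1 hc.2)

theorem le_of_mem_span_Iic_of_notMem_span_Iio (hk : c ∈ span K (v '' Iic k))
    (hm : c ∉ span K (v '' Iio m)) : m ≤ k :=
  not_lt.1 fun hkm ↦ hm (span_mono (image_mono (Iic_subset_Iio.2 hkm)) hk)

theorem pivotsMod_eq_sdiff_singleton_iff (hm : m ∈ pivots K v) :
    pivotsMod K c v = pivots K v \ {m} ↔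
      c ∈ (span K (v '' Iic m) \ span K (v '' Iio m) : Set V) := by
  constructor
  · intro h
    exact mem_span_Iic_sdiff_of_notMem_pivotsMod hm (h ▸ notMem_sdiff_of_mem rfl)
  · intro hc
    refine subset_antisymm (subset_sdiff_singleton (pivotsMod_subset_pivots c v)
      (notMem_pivotsMod_of_mem_span_Iic_sdiff hc)) fun k ⟨hk, hne⟩ ↦ ?_
    by_contra hk'
    have hck := mem_span_Iic_sdiff_of_notMem_pivotsMod hk hk'
    exact hne ((le_of_mem_span_Iic_of_notMem_span_Iio hc.1 hck.2).antisymm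
      (le_of_mem_span_Iic_of_notMem_span_Iio hck.1 hc.2))

end Pivots

section Counting

variable {K V ι : Type*} [DivisionRing K] [AddCommGroup V] [Module K V] {w : ι → V}

theorem ncard_span_image_finset (hw : LinearIndependent K w) (s : Finset ι) :
    (span K (w '' s) : Set V).ncard = Nat.card K ^ s.card := by
  have hli : LinearIndependent K (fun i : s ↦ w i) := hw.comp _ Subtype.val_injective
  have := FiniteDimensional.span_of_finite K (s.finite_toSet.image w)
  have hrank : Module.finrank K (span K (w '' s)) = s.card := by
    rw [image_eq_range]
    exact (finrank_span_eq_card hli).trans (Fintype.card_coe s)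
  rw [← hrank]
  exact Module.natCard_eq_pow_finrank

theorem ncard_span_sdiff_span [Finite K] (hw : LinearIndependent K w) {s t : Finset ι}
    (hst : s ⊆ t) :
    (span K (w '' t) \ span K (w '' s) : Set V).ncard =
      Nat.card K ^ t.card - Nat.card K ^ s.card := by
  have := FiniteDimensional.span_of_finite K (s.finite_toSet.image w)
  have := Module.finite_of_finite K (M := span K (w '' s))
  rw [ncard_sdiff (span_mono (image_mono (Finset.coe_subset.2 hst))) (toFinite _),
    ncard_span_image_finset hw, ncard_span_image_finset hw]

end Counting

/-- The sequence `a, v 0, v 1, …`, the counterpart of `prependCol` for sequences. -/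
def prepend {α : Type*} (a : α) (v : ℕ → α) : ℕ → α
  | 0 => a
  | n + 1 => v n

theorem image_prepend_Iio_succ {α : Type*} (a : α) (v : ℕ → α) (n : ℕ) :
    prepend a v '' Iio (n + 1) = insert a (v '' Iio n) := by
  ext x
  simp only [mem_image, mem_Iio, Nat.exists_lt_succ_left, prepend, mem_insert_iff, eq_comm]

section Prepend

variable {K V : Type*} [DivisionRing K] [AddCommGroup V] [Module K V] {c : V} {v : ℕ → V}

theorem zero_mem_pivots_prepend : 0 ∈ pivots K (prepend c v) ↔ c ≠ 0 := by
  simp [pivots, prepend]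

theorem succ_mem_pivots_prepend {n : ℕ} :
    n + 1 ∈ pivots K (prepend c v) ↔ n ∈ pivotsMod K c v := by
  simp only [pivots, pivotsMod, image_prepend_Iio_succ, prepend, mem_ofPred_eq]

theorem pivots_prepend_eq_image_succ_iff {s : Set ℕ} :
    pivots K (prepend c v) = (· + 1) '' s ↔ c = 0 ∧ pivotsMod K c v = s := by
  rw [Set.ext_iff, ← Nat.and_forall_add_one]
  simp [Set.ext_iff, zero_mem_pivots_prepend, succ_mem_pivots_prepend]

theorem pivots_prepend_eq_insert_zero_iff {s : Set ℕ} :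
    pivots K (prepend c v) = insert 0 ((· + 1) '' s) ↔ c ≠ 0 ∧ pivotsMod K c v = s := by
  rw [Set.ext_iff, ← Nat.and_forall_add_one]
  simp [Set.ext_iff, zero_mem_pivots_prepend, succ_mem_pivots_prepend]

theorem pivots_prepend_eq_image_succ_pivots_iff :
    pivots K (prepend c v) = (· + 1) '' pivots K v ↔ c = 0 := by
  rw [pivots_prepend_eq_image_succ_iff, and_iff_left_iff_imp]
  rintro rfl
  exact pivotsMod_zero v

theorem pivots_prepend_eq_insert_zero_sdiff_iff {m : ℕ} (hm : m ∈ pivots K v) :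
    pivots K (prepend c v) = insert 0 ((· + 1) '' (pivots K v \ {m})) ↔
      c ∈ (span K (v '' Iic m) \ span K (v '' Iio m) : Set V) := by
  rw [pivots_prepend_eq_insert_zero_iff, pivotsMod_eq_sdiff_singleton_iff hm,
    and_iff_right_iff_imp]
  rintro hc rfl
  exact hc.2 (zero_mem _)

variable {ι : Type*} [LinearOrder ι] {p : ι → ℕ}

theorem setOf_pivots_prepend_eq_sdiff (hp : StrictMono p) (hrange : range p = pivots K v) (j : ι) :
    {c : V | pivots K (prepend c v) = insert 0 ((· + 1) '' (pivots K v \ {p j}))} =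
      (span K ((fun i ↦ v (p i)) '' Iic j) \ span K ((fun i ↦ v (p i)) '' Iio j) : Set V) := by
  have hIic : Iic j = p ⁻¹' Iic (p j) := by ext; simp [hp.le_iff_le]
  have hIio : Iio j = p ⁻¹' Iio (p j) := by ext; simp [hp.lt_iff_lt]
  rw [hIic, hIio, span_comp_image_preimage hrange (isLowerSet_Iic _),
    span_comp_image_preimage hrange (isLowerSet_Iio _)]
  ext c
  exact pivots_prepend_eq_insert_zero_sdiff_iff (hrange ▸ mem_range_self j)

theorem stmt1_general [Fintype K] [LocallyFiniteOrderBot ι] {q : ℕ} (hq : Fintype.card K = q)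
    (v : ℕ → V) (hp : StrictMono p) (hrange : range p = pivots K v) :
    ({c : V | pivots K (prepend c v) = (· + 1) '' pivots K v} = {0} ∧
      {c : V | pivots K (prepend c v) = (· + 1) '' pivots K v}.ncard = 1) ∧
    ∀ j : ι,
      {c : V | pivots K (prepend c v) = insert 0 ((· + 1) '' (pivots K v \ {p j}))} =
        (span K ((fun i ↦ v (p i)) '' Iic j) \ span K ((fun i ↦ v (p i)) '' Iio j) : Set V) ∧
      {c : V | pivots K (prepend c v) = insert 0 ((· + 1) '' (pivots K v \ {p j}))}.ncard =
        q ^ (Finset.Iic j).card - q ^ (Finset.Iio j).card := by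
  have hzero : {c : V | pivots K (prepend c v) = (· + 1) '' pivots K v} = {0} :=
    Set.ext fun _ ↦ pivots_prepend_eq_image_succ_pivots_iff
  have hli : LinearIndependent K (fun i ↦ v (p i)) :=
    (linearIndepOn_range_iff hp.injective v).1 (hrange ▸ linearIndepOn_pivots v)
  refine ⟨⟨hzero, hzero ▸ ncard_singleton 0⟩, fun j ↦ ?_⟩
  have hset := setOf_pivots_prepend_eq_sdiff hp hrange j
  refine ⟨hset, ?_⟩
  rw [hset, ← hq, ← Nat.card_eq_fintype_card, ← Finset.coe_Iic, ← Finset.coe_Iio]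
  exact ncard_span_sdiff_span hli Finset.Iio_subset_Iic_self

end Prepend

theorem pivotSet_eq_pivots_transpose {F : Type*} [Field F] {b : ℕ} (M : Matrix (Fin b) ℕ F) :
    pivotSet M = pivots F Mᵀ :=
  rfl

theorem transpose_prependCol {F : Type*} [Field F] {b : ℕ} (c : Fin b → F)
    (M : Matrix (Fin b) ℕ F) : (prependCol c M)ᵀ = prepend c Mᵀ := by
  ext (_ | n) i <;> rfl

theorem stmt1 {F : Type*} [Field F] [Fintype F] {q b : ℕ} (hq : Fintype.card F = q)
    (M : Matrix (Fin b) ℕ F)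
    (hM : Submodule.span F (Set.range Mᵀ) = ⊤)
    (p : Fin b → ℕ) (hp : StrictMono p) (hrange : Set.range p = pivotSet M) :
    ({c : Fin b → F | pivotSet (prependCol c M) = (· + 1) '' pivotSet M} = {0} ∧
      ({c : Fin b → F | pivotSet (prependCol c M) = (· + 1) '' pivotSet M}).ncard = 1) ∧
    ∀ j : Fin b,
      ({c : Fin b → F | pivotSet (prependCol c M) =
          insert 0 ((· + 1) '' (pivotSet M \ {p j}))} =
        (↑(Submodule.span F ((fun i => Mᵀ (p i)) '' {i : Fin b | i ≤ j})) \
          ↑(Submodule.span F ((fun i => Mᵀ (p i)) '' {i : Fin b | i < j})) : Set (Fin b → F))) ∧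
      ({c : Fin b → F | pivotSet (prependCol c M) =
          insert 0 ((· + 1) '' (pivotSet M \ {p j}))}).ncard =
        q ^ ((j : ℕ) + 1) - q ^ (j : ℕ) := by
  simpa only [pivotSet_eq_pivots_transpose, transpose_prependCol, Iic_def, Iio_def,
    Fin.card_Iic, Fin.card_Iio] using stmt1_general hq Mᵀ hp hrange
end

section
/- Fix b ∈ ℕ and a real number q > 1. Then the family (q^{−ℓ̃(w)}) indexed by all injective functions w : Fin b → ℕ is summable, with sum (1 − q^{−1})^{−b}. Equivalently, w ↦ (1 − q^{−1})^b · q^{−ℓ̃(w)} is a probability distribution on the set of flag juggling states with b balls. -/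
/-- The inversion number of a flag juggling state `w : Fin b → ℕ` (the ball labeled
`i+1` sits at position `w i`, all other positions empty): pairs of labels out of order,
plus pairs of an empty position and a ball to its right. -/
def flagInv {b : ℕ} (w : Fin b → ℕ) : ℕ :=
  ((Finset.univ : Finset (Fin b × Fin b)).filter
    fun p => p.2 < p.1 ∧ w p.1 < w p.2).card +
  ∑ i : Fin b, ((Finset.range (w i)).filter fun p => ∀ k, w k ≠ p).card

/-!
Place the balls one at a time in the order of their labels. The total inversion number is then the
sum over the balls of the number of positions to the left of the new ball that were still empty
when it was placed. The new ball may be put on the `n`-th empty position for any `n`, and its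
contribution is then exactly `n`, so each ball multiplies the generating function of `flagInv`
by the geometric series `∑ n, x ^ n`.
-/

/-- Flag juggling states with `b` balls: the ball labeled `i + 1` is encoded as `i : Fin b`. -/
abbrev FlagState (b : ℕ) : Type := {w : Fin b → ℕ // Function.Injective w}

/-- A position of the state `w` that holds no ball. It is spelled as in `flagInv`, rather than as
`p ∉ Set.range w`, to share its decidability instance. -/
abbrev IsVacant {b : ℕ} (w : Fin b → ℕ) (p : ℕ) : Prop := ∀ k, w k ≠ p

/-- The Lehmer code of a state: `flagCode w j` counts the positions to the left of ball `j` that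
hold no ball with a smaller label. -/
def flagCode {b : ℕ} (w : Fin b → ℕ) (j : Fin b) : ℕ :=
  Nat.count (fun p => ∀ k < j, w k ≠ p) (w j)

section Combinatorics

open Finset

variable {b : ℕ}

theorem infinite_isVacant (w : Fin b → ℕ) : {p | IsVacant w p}.Infinite := by
  have compl_range : {p | IsVacant w p} = (Set.range w)ᶜ := by
    ext p
    simp
  exact compl_range ▸ (Set.finite_range w).infinite_compl

theorem flagCode_eq_card_add_card {w : Fin b → ℕ} (hw : Function.Injective w) (j : Fin b) :
    flagCode w j = #{i | j < i ∧ w i < w j} + #{p ∈ range (w j) | IsVacant w p} := by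
  have occupied : {p ∈ range (w j) | (∀ k < j, w k ≠ p) ∧ ¬ IsVacant w p} =
      image w {i | j < i ∧ w i < w j} := by
    ext p
    simp only [mem_filter, mem_range, mem_image, mem_univ, true_and, IsVacant, not_forall, not_not]
    constructor
    · rintro ⟨hp, hsmaller, i, rfl⟩
      have hji : j ≤ i := not_lt.mp fun hij => hsmaller i hij rfl
      exact ⟨i, ⟨hji.lt_of_ne fun h => hp.ne (congrArg w h.symm), hp⟩, rfl⟩
    · rintro ⟨i, ⟨hji, hi⟩, rfl⟩
      exact ⟨hi, fun k hkj hki => (hkj.trans hji).ne (hw hki), i, rfl⟩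
  have vacant : {p ∈ range (w j) | (∀ k < j, w k ≠ p) ∧ IsVacant w p} =
      {p ∈ range (w j) | IsVacant w p} :=
    filter_congr fun p _ => and_iff_right_of_imp fun hp k _ => hp k
  rw [flagCode, Nat.count_eq_card_filter_range, ← card_filter_add_card_filter_not (IsVacant w),
    filter_filter, filter_filter, vacant, occupied, card_image_of_injective _ hw, add_comm]

theorem flagInv_eq_sum_flagCode {w : Fin b → ℕ} (hw : Function.Injective w) :
    flagInv w = ∑ j, flagCode w j := by
  have card_inversions : #{p : Fin b × Fin b | p.2 < p.1 ∧ w p.1 < w p.2} =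
      ∑ j, #{i | j < i ∧ w i < w j} := by
    simp only [card_filter, Fintype.sum_prod_type_right]
  rw [flagInv, card_inversions, ← sum_add_distrib]
  exact sum_congr rfl fun j _ => (flagCode_eq_card_add_card hw j).symm

theorem flagCode_snoc_castSucc (w : Fin b → ℕ) (m : ℕ) (j : Fin b) :
    flagCode (Fin.snoc w m : Fin (b + 1) → ℕ) j.castSucc = flagCode w j := by
  simp [flagCode, Fin.forall_fin_succ', Fin.le_last, not_lt]

theorem flagCode_snoc_last (w : Fin b → ℕ) (m : ℕ) :
    flagCode (Fin.snoc w m : Fin (b + 1) → ℕ) (Fin.last b) = Nat.count (IsVacant w) m := by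
  simp [flagCode, Fin.forall_fin_succ', Fin.castSucc_lt_last]

theorem flagInv_snoc {w : Fin b → ℕ} (hw : Function.Injective w) {m : ℕ} (hm : IsVacant w m) :
    flagInv (Fin.snoc w m : Fin (b + 1) → ℕ) = flagInv w + Nat.count (IsVacant w) m := by
  have hsnoc : Function.Injective (Fin.snoc w m : Fin (b + 1) → ℕ) :=
    Fin.snoc_injective_iff.mpr ⟨hw, fun ⟨k, hk⟩ => hm k hk⟩
  simp only [flagInv_eq_sum_flagCode hsnoc, flagInv_eq_sum_flagCode hw, Fin.sum_univ_castSucc,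
    flagCode_snoc_castSucc, flagCode_snoc_last]

/-- Adding a ball with a new largest label: `(w, n)` is sent to the state in which the new ball
sits on the `n`-th vacant position of `w`, counting from `0`. -/
noncomputable def addBallEquiv (b : ℕ) : FlagState b × ℕ ≃ FlagState (b + 1) where
  toFun x := ⟨Fin.snoc x.1.1 (Nat.nth (IsVacant x.1.1) x.2), Fin.snoc_injective_iff.mpr
    ⟨x.1.2, fun ⟨k, hk⟩ => Nat.nth_mem_of_infinite (infinite_isVacant x.1.1) x.2 k hk⟩⟩
  invFun w := (⟨Fin.init w.1, w.2.comp (Fin.castSucc_injective b)⟩, flagCode w.1 (Fin.last b))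
  left_inv := by
    rintro ⟨⟨w, hw⟩, n⟩
    simp only [Fin.init_snoc, flagCode_snoc_last, Nat.count_nth_of_infinite (infinite_isVacant w)]
  right_inv := by
    rintro ⟨w, hw⟩
    have hlast : IsVacant (Fin.init w) (w (Fin.last b)) :=
      fun k hk => (Fin.castSucc_lt_last k).ne (hw hk)
    have hcode : flagCode w (Fin.last b) =
        Nat.count (IsVacant (Fin.init w)) (w (Fin.last b)) := by
      rw [← flagCode_snoc_last, Fin.snoc_init_self]
    simp only [hcode, Nat.nth_count hlast, Fin.snoc_init_self]

theorem flagInv_addBallEquiv (x : FlagState b × ℕ) :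
    flagInv (addBallEquiv b x).1 = flagInv x.1.1 + x.2 := by
  have hinf := infinite_isVacant x.1.1
  exact (flagInv_snoc x.1.2 (Nat.nth_mem_of_infinite hinf x.2)).trans
    (congrArg _ (Nat.count_nth_of_infinite hinf x.2))

end Combinatorics

section GeneratingFunction

instance : Unique (FlagState 0) where
  default := ⟨Fin.elim0, Function.injective_of_subsingleton _⟩
  uniq _ := Subsingleton.elim _ _

variable {R : Type*} [NormedRing R] {x : R}

theorem summable_norm_pow_flagInv (b : ℕ) (hx : ‖x‖ < 1) :
    Summable fun w : FlagState b => ‖x ^ flagInv w.1‖ := by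
  induction b with
  | zero => exact (hasSum_fintype _).summable
  | succ b ih =>
    rw [← (addBallEquiv b).summable_iff]
    simpa only [Function.comp_def, flagInv_addBallEquiv, pow_add] using
      ih.mul_norm (summable_norm_geometric_of_norm_lt_one hx)

theorem hasSum_pow_flagInv [CompleteSpace R] (b : ℕ) (hx : ‖x‖ < 1) :
    HasSum (fun w : FlagState b => x ^ flagInv w.1) ((∑' n : ℕ, x ^ n) ^ b) := by
  induction b with
  | zero => simp [flagInv]
  | succ b ih =>
    have hprod : Summable fun y : FlagState b × ℕ => x ^ flagInv y.1.1 * x ^ y.2 :=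
      summable_mul_of_summable_norm (f := fun w : FlagState b => x ^ flagInv w.1)
        (summable_norm_pow_flagInv b hx) (summable_norm_geometric_of_norm_lt_one hx)
    rw [← (addBallEquiv b).hasSum_iff, pow_succ]
    simpa only [Function.comp_def, flagInv_addBallEquiv, pow_add] using
      ih.mul (summable_geometric_of_norm_lt_one hx).hasSum hprod

end GeneratingFunction

theorem stmt13_general {𝕜 : Type*} [NormedDivisionRing 𝕜] [CompleteSpace 𝕜] (b : ℕ) (q : 𝕜)
    (hq : 1 < ‖q‖) :
    HasSum (fun w : FlagState b => (q ^ flagInv w.1)⁻¹) ((1 - q⁻¹) ^ b)⁻¹ ∧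
    HasSum (fun w : FlagState b => (1 - q⁻¹) ^ b * (q ^ flagInv w.1)⁻¹) 1 := by
  have hnorm : ‖q⁻¹‖ < 1 := norm_inv q ▸ inv_lt_one_of_one_lt₀ hq
  have hne : 1 - q⁻¹ ≠ 0 := sub_ne_zero.mpr fun h => by simp [← h] at hnorm
  have hsum : HasSum (fun w : FlagState b => (q ^ flagInv w.1)⁻¹) ((1 - q⁻¹) ^ b)⁻¹ := by
    simpa only [tsum_geometric_of_norm_lt_one hnorm, ← inv_pow] using hasSum_pow_flagInv b hnorm
  refine ⟨hsum, ?_⟩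
  simpa only [mul_inv_cancel₀ (pow_ne_zero b hne)] using hsum.mul_left ((1 - q⁻¹) ^ b)

theorem stmt13 (b : ℕ) (q : ℝ) (hq : 1 < q) :
    HasSum (fun w : {w : Fin b → ℕ // Function.Injective w} =>
        ((q ^ flagInv w.1)⁻¹ : ℝ)) ((1 - q⁻¹) ^ b)⁻¹ ∧
    HasSum (fun w : {w : Fin b → ℕ // Function.Injective w} =>
        ((1 - q⁻¹) ^ b * (q ^ flagInv w.1)⁻¹ : ℝ)) 1 :=
  stmt13_general b q (hq.trans_le (Real.le_norm_self q))
end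

section
/- Fix b ≥ 1 and a real number q > 1, and define π(w) := (1 − q^{−1})^b · q^{−ℓ̃(w)} on flag juggling states with b balls. Consider the Markov chain on flag juggling states defined as follows, using a coin with heads-probability 1/q. From state w: hold the symbol ∞ and point at the occupied position with the largest value; then repeat: flip the coin; on tails, place the currently held symbol at the pointed position (the position becomes empty if the held symbol is ∞) and pick up the label that was there; on heads, do nothing; then move the pointer to the largest occupied position smaller than the current one whose label is smaller than the currently held symbol (where ∞ is larger than every label); if no such position exists, terminate: the new state is obtained by shifting every occupied position up by one and, if the held symbol is a label (not ∞), placing it at position 0. Then π is stationary for this chain: for every flag juggling state w', the sum over all flag juggling states w of π(w) times the probability that the chain started at w terminates at w' converges and equals π(w'). -/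
/-- During the walking process, the state is a partial placement `w : Fin b → Option ℕ`,
where `w k = some p` means the ball labeled `k+1` sits at position `p` and `w k = none`
means the ball labeled `k+1` is currently held (if no label is held, the held symbol
is `∞`).  `tailsSwap w k` performs a tails-flip at the position `w k`: the held symbol
is placed at that position (the position becomes empty if the held symbol is `∞`)
and the label `k+1` is picked up. -/
def tailsSwap {b : ℕ} (w : Fin b → Option ℕ) (k : Fin b) : Fin b → Option ℕ :=
  fun m => if m = k then none else if w m = none then w k else w m

/-- The final state of the process: every placed ball shifts up one position and the
held label (if any) is placed at position `0`. -/
def finalState {b : ℕ} (w : Fin b → Option ℕ) : Fin b → ℕ :=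
  fun m => match w m with
    | some p => p + 1
    | none => 0

/-- `walkProb q ptr w w'` is the probability that the walking process, currently in
partial placement `w` with the pointer about to scan positions `ptr - 1, ptr - 2, ..., 0`,
terminates at the flag juggling state `w'`.  A position `p` is a flip site when it is
occupied by a ball whose label is smaller than the held symbol (`∞`, i.e. no `k` with
`w k = none`, counts as larger than every label); there the coin is flipped:
heads (probability `q⁻¹`) does nothing, tails (probability `1 - q⁻¹`) places the held
symbol and picks up the ball. -/
noncomputable def walkProb (q : ℝ) {b : ℕ} : ℕ → (Fin b → Option ℕ) → (Fin b → ℕ) → ℝ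
  | 0, w, w' => if w' = finalState w then 1 else 0
  | p + 1, w, w' =>
    let ks := Finset.univ.filter fun k : Fin b => w k = some p ∧ ∀ j, w j = none → k < j
    if h : ks.Nonempty then
      q⁻¹ * walkProb q p w w' + (1 - q⁻¹) * walkProb q p (tailsSwap w (ks.max' h)) w'
    else
      walkProb q p w w'

/-- The transition probability of the backwards flag-juggling Markov chain: the process
starts at the fully placed state `w`, holding `∞` and pointing at the largest occupied
position; `transProb q w w'` is the probability that it terminates at `w'`. -/
noncomputable def transProb (q : ℝ) {b : ℕ} (w : Fin b → ℕ) (w' : Fin b → ℕ) : ℝ :=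
  walkProb q (Finset.univ.sup w + 1) (fun k => some (w k)) w'

/-!
Holding a symbol while the pointer stands just above position `p` is the same as having that
symbol sit at position `p` of a genuine state. In this picture, moving the pointer from `p + 1`
down to `p` exchanges the contents of positions `p` and `p + 1`, except that at an ascent tails
leaves the state alone. As an exchange at an ascent adds exactly one inversion, the weights
`q ^ (-flagInv w)` balance on each pair of states exchanged, so the weighted
number of walks ending at `w'` does not depend on `p`. At `p = 0` it is `q ^ (-flagInv w')`.
As `p → ∞` the summand of each fixed `w` becomes stationary at `q ^ (-flagInv w)` times the
transition probability, and the weights are summable, so dominated convergence applies.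
-/

section Summation

variable {ι : Type*}

theorem summable_prod_comp [Fintype ι] {κ : ι → Type*} {f : ∀ i, κ i → ℝ}
    (hf₀ : ∀ i k, 0 ≤ f i k) (hf : ∀ i, Summable (f i)) :
    Summable fun x : ∀ i, κ i => ∏ i, f i (x i) := by
  classical
  refine summable_of_sum_le (c := ∏ i, ∑' k, f i k)
    (fun x => Finset.prod_nonneg fun i _ => hf₀ i (x i)) fun s => ?_
  calc ∑ x ∈ s, ∏ i, f i (x i)
      ≤ ∑ x ∈ Fintype.piFinset fun i => s.image (· i), ∏ i, f i (x i) :=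
        Finset.sum_le_sum_of_subset_of_nonneg
          (fun x hx => Fintype.mem_piFinset.2 fun i => Finset.mem_image_of_mem (· i) hx)
          fun x _ _ => Finset.prod_nonneg fun i _ => hf₀ i (x i)
    _ = ∏ i, ∑ k ∈ s.image (· i), f i k := (Finset.prod_univ_sum _ _).symm
    _ ≤ ∏ i, ∑' k, f i k :=
        Finset.prod_le_prod (fun i _ => Finset.sum_nonneg fun k _ => hf₀ i k)
          fun i _ => (hf i).sum_le_tsum _ fun k _ => hf₀ i k

theorem tsum_eq_tsum_of_add_comp_perm_eq {M : Type*} [AddCommMonoid M] [IsAddTorsionFree M]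
    [TopologicalSpace M] [ContinuousAdd M] [T2Space M] {f g : ι → M} (hf : Summable f)
    (hg : Summable g) (e : Equiv.Perm ι) (h : ∀ i, f i + f (e i) = g i + g (e i)) :
    ∑' i, f i = ∑' i, g i := by
  have tsum_add_comp {φ : ι → M} (hφ : Summable φ) : ∑' i, (φ i + φ (e i)) = 2 • ∑' i, φ i :=
    (hφ.hasSum.add (e.hasSum_iff.2 hφ.hasSum)).tsum_eq.trans (two_nsmul _).symm
  refine nsmul_right_injective two_ne_zero ?_
  simp only [← tsum_add_comp hf, ← tsum_add_comp hg, h]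

end Summation

namespace FlagJuggling

open Equiv Filter Function Topology

variable {b : ℕ}

section Symbol

/-- The symbol at position `p` of `w`: the label of the ball there, or `⊤` (the symbol `∞`) if the
position is empty. Taking a minimum makes this total without assuming `w` injective. -/
def symbolAt (w : Fin b → ℕ) (p : ℕ) : WithTop (Fin b) :=
  (Finset.univ.filter fun k => w k = p).min

theorem coe_lt_symbolAt {w : Fin b → ℕ} {p : ℕ} {i : Fin b} :
    (i : WithTop (Fin b)) < symbolAt w p ↔ ∀ j, w j = p → i < j := by
  simp [symbolAt, Finset.min_eq_inf_withTop, Finset.lt_inf_iff (WithTop.coe_lt_top i)]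

theorem symbolAt_eq_top {w : Fin b → ℕ} {p : ℕ} : symbolAt w p = ⊤ ↔ ∀ k, w k ≠ p := by
  simp [symbolAt, Finset.min_eq_top, Finset.filter_eq_empty_iff]

theorem apply_eq_of_symbolAt_eq_coe {w : Fin b → ℕ} {p : ℕ} {k : Fin b}
    (h : symbolAt w p = k) : w k = p := by
  simpa using Finset.mem_of_min h

theorem symbolAt_perm_comp (e : Perm ℕ) (w : Fin b → ℕ) (p : ℕ) :
    symbolAt (e ∘ w) p = symbolAt w (e.symm p) := by
  simp [symbolAt, Equiv.eq_symm_apply]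

theorem symbolAt_swap_comp_left (w : Fin b → ℕ) (p r : ℕ) :
    symbolAt (swap p r ∘ w) p = symbolAt w r := by
  simp [symbolAt_perm_comp]

theorem symbolAt_swap_comp_right (w : Fin b → ℕ) (p r : ℕ) :
    symbolAt (swap p r ∘ w) r = symbolAt w p := by
  simp [symbolAt_perm_comp]

theorem swap_comp_swap_comp (w : Fin b → ℕ) (p r : ℕ) : swap p r ∘ swap p r ∘ w = w := by
  ext; simp

theorem swap_comp_eq_self {w : Fin b → ℕ} {p r : ℕ} (hp : ∀ k, w k ≠ p) (hr : ∀ k, w k ≠ r) :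
    swap p r ∘ w = w :=
  funext fun k => swap_apply_of_ne_of_ne (hp k) (hr k)

theorem swap_comp_eq_self_of_symbolAt_eq {w : Fin b → ℕ} {p r : ℕ} (hpr : p ≠ r)
    (h : symbolAt w p = symbolAt w r) : swap p r ∘ w = w := by
  rcases hs : symbolAt w p with _ | k
  · exact swap_comp_eq_self (symbolAt_eq_top.1 hs) (symbolAt_eq_top.1 (h ▸ hs))
  · have hp := apply_eq_of_symbolAt_eq_coe hs
    have hr := apply_eq_of_symbolAt_eq_coe (h ▸ hs)
    exact absurd (hp.symm.trans hr) hpr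

end Symbol

section Inversions

/-- The inversions of `w`, encoded as pairs of a ball and a position on its left holding a larger
symbol. This treats empty positions and balls on the same footing. -/
def inversions (w : Fin b → ℕ) : Finset (Σ _ : Fin b, ℕ) :=
  Finset.univ.sigma fun i => (Finset.range (w i)).filter fun p => i < symbolAt w p

theorem mem_inversions {w : Fin b → ℕ} {i : Fin b} {p : ℕ} :
    ⟨i, p⟩ ∈ inversions w ↔ p < w i ∧ i < symbolAt w p := by
  simp [inversions]

theorem card_filter_lt_symbolAt {w : Fin b → ℕ} (hw : Injective w) (i : Fin b) :
    ((Finset.range (w i)).filter fun p => i < symbolAt w p).card =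
      (Finset.univ.filter fun j => i < j ∧ w j < w i).card +
        ((Finset.range (w i)).filter fun p => ∀ k, w k ≠ p).card := by
  rw [← Finset.card_image_of_injective _ hw, ← Finset.card_union_of_disjoint]
  · congr 1
    ext p
    by_cases hp : ∃ k, w k = p
    · obtain ⟨k, rfl⟩ := hp
      simp [coe_lt_symbolAt, hw.eq_iff, and_comm]
    · simp only [not_exists] at hp
      simp [symbolAt_eq_top.2 hp, hp]
  · rw [Finset.disjoint_left]
    simp only [Finset.mem_image, Finset.mem_filter]
    rintro p ⟨j, -, hj⟩ ⟨-, hp⟩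
    exact hp j hj

theorem card_inversions {w : Fin b → ℕ} (hw : Injective w) :
    (inversions w).card = flagInv w := by
  have card_pairs : (Finset.univ.filter fun r : Fin b × Fin b => r.2 < r.1 ∧ w r.1 < w r.2).card =
      ∑ i, (Finset.univ.filter fun j => i < j ∧ w j < w i).card := by
    simp only [Finset.card_filter, Fintype.sum_prod_type_right]
  rw [flagInv, card_pairs, ← Finset.sum_add_distrib, inversions, Finset.card_sigma]
  exact Finset.sum_congr rfl fun i _ => card_filter_lt_symbolAt hw i

theorem swap_succ_lt_iff {p r s : ℕ} (h : ¬(r = p + 1 ∧ s = p + 1)) :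
    r < swap p (p + 1) s ↔ r = p ∧ s = p ∨ swap p (p + 1) r < s := by
  simp only [swap_apply_def]
  split_ifs <;> omega

theorem mem_map_swap {s : Finset (Σ _ : Fin b, ℕ)} {p r t : ℕ} {i : Fin b} :
    ⟨i, t⟩ ∈ s.map (sigmaCongrRight fun _ => swap p r).toEmbedding ↔ ⟨i, swap p r t⟩ ∈ s :=
  Finset.mem_map_equiv

theorem inversions_swap_comp {w : Fin b → ℕ} (hw : Injective w) {p : ℕ} {x : Fin b}
    (hx : symbolAt w p = x) (h : symbolAt w p < symbolAt w (p + 1)) :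
    inversions (swap p (p + 1) ∘ w) =
      insert ⟨x, p⟩ ((inversions w).map (sigmaCongrRight fun _ => swap p (p + 1)).toEmbedding) := by
  have hxp : ∀ i, w i = p ↔ i = x := fun i => by
    rw [← hw.eq_iff, apply_eq_of_symbolAt_eq_coe hx]
  ext ⟨i, r⟩
  have mem_swap : ⟨i, r⟩ ∈ inversions (swap p (p + 1) ∘ w) ↔
      r < swap p (p + 1) (w i) ∧ i < symbolAt w (swap p (p + 1) r) := by
    rw [mem_inversions, symbolAt_perm_comp, symm_swap, comp_apply]
  have mem_insert : (⟨i, r⟩ : Σ _ : Fin b, ℕ) = ⟨x, p⟩ ↔ r = p ∧ w i = p := by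
    simp [hxp, and_comm]
  rw [mem_swap, Finset.mem_insert, mem_insert, mem_map_swap, mem_inversions]
  by_cases hpp : r = p ∧ w i = p
  · obtain ⟨rfl, hi⟩ := hpp
    have : (i : WithTop (Fin b)) < symbolAt w (r + 1) := by rwa [(hxp i).1 hi, ← hx]
    simp [hi, this]
  · rw [or_iff_right hpp]
    refine and_congr_left fun hir => (swap_succ_lt_iff ?_).trans (or_iff_right hpp)
    rintro ⟨rfl, hi⟩
    rw [swap_apply_right] at hir
    exact (coe_lt_symbolAt.1 (hir.trans h) i hi).false

theorem flagInv_swap_comp {w : Fin b → ℕ} (hw : Injective w) {p : ℕ}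
    (h : symbolAt w p < symbolAt w (p + 1)) :
    flagInv (swap p (p + 1) ∘ w) = flagInv w + 1 := by
  obtain ⟨x, hx⟩ := WithTop.ne_top_iff_exists.1 h.ne_top
  have hxp := apply_eq_of_symbolAt_eq_coe hx.symm
  rw [← card_inversions ((swap p (p + 1)).injective.comp hw), inversions_swap_comp hw hx.symm h,
    Finset.card_insert_of_notMem, Finset.card_map, card_inversions hw]
  simp [mem_inversions, hxp]

theorem sum_le_flagInv_add (w : Fin b → ℕ) : ∑ i, w i ≤ flagInv w + b * b := by
  have le_card_empty_add (i : Fin b) :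
      w i ≤ ((Finset.range (w i)).filter fun p => ∀ k, w k ≠ p).card + b := by
    have sdiff_eq : Finset.range (w i) \ Finset.univ.image w =
        (Finset.range (w i)).filter fun p => ∀ k, w k ≠ p := by
      ext; simp
    calc w i = (Finset.range (w i)).card := (Finset.card_range _).symm
      _ ≤ (Finset.range (w i) \ Finset.univ.image w).card + (Finset.univ.image w).card :=
        Finset.card_le_card_sdiff_add_card
      _ ≤ _ := by
        rw [sdiff_eq]
        gcongr
        simpa using Finset.card_image_le (s := Finset.univ) (f := w)
  calc ∑ i, w i ≤ ∑ i, (((Finset.range (w i)).filter fun p => ∀ k, w k ≠ p).card + b) :=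
        Finset.sum_le_sum fun i _ => le_card_empty_add i
    _ = ∑ i, ((Finset.range (w i)).filter fun p => ∀ k, w k ≠ p).card + b * b := by
        simp [Finset.sum_add_distrib]
    _ ≤ flagInv w + b * b := Nat.add_le_add_right (Nat.le_add_left _ _) _

theorem summable_inv_pow_flagInv {q : ℝ} (hq : 1 < q) :
    Summable fun w : Fin b → ℕ => (q ^ flagInv w)⁻¹ := by
  have geometric : Summable fun n : ℕ => q⁻¹ ^ n :=
    summable_geometric_of_lt_one (by positivity) (inv_lt_one_of_one_lt₀ hq)
  refine .of_nonneg_of_le (fun w => by positivity) (fun w => ?_)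
    ((summable_prod_comp (fun _ _ => by positivity) fun _ : Fin b => geometric).mul_left
      (q ^ (b * b)))
  rw [Finset.prod_pow_eq_pow_sum, inv_pow, ← div_eq_mul_inv, le_div_iff₀ (by positivity),
    inv_mul_le_iff₀ (by positivity), ← pow_add]
  exact pow_le_pow_right₀ hq.le (sum_le_flagInv_add w)

end Inversions

section Walk

variable {q : ℝ} {p : ℕ} {w w' : Fin b → ℕ}

theorem walkProb_mem_Icc (hq : 1 ≤ q) (w' : Fin b → ℕ) (p : ℕ) (v : Fin b → Option ℕ) :
    walkProb q p v w' ∈ Set.Icc (0 : ℝ) 1 := by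
  induction p generalizing v with
  | zero =>
    rw [walkProb]
    split_ifs <;> simp
  | succ p ih =>
    rw [walkProb]
    split_ifs
    · exact convex_Icc (0 : ℝ) 1 (ih v) (ih _) (by positivity)
        (sub_nonneg.2 (inv_le_one_of_one_le₀ hq)) (add_sub_cancel _ _)
    · exact ih v

theorem walkProb_succ_of_flip {v : Fin b → Option ℕ} {k : Fin b} (hk : ∀ j, v j = some p ↔ j = k)
    (hlt : ∀ j, v j = none → k < j) :
    walkProb q (p + 1) v w' =
      q⁻¹ * walkProb q p v w' + (1 - q⁻¹) * walkProb q p (tailsSwap v k) w' := by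
  have flip_sites : (Finset.univ.filter fun i => v i = some p ∧ ∀ j, v j = none → i < j) = {k} := by
    ext i
    simp only [Finset.mem_filter_univ, hk, Finset.mem_singleton]
    exact ⟨And.left, fun hi => ⟨hi, hi ▸ hlt⟩⟩
  simp [walkProb, flip_sites]

theorem walkProb_succ_of_no_flip {v : Fin b → Option ℕ}
    (h : ∀ k, v k = some p → ∃ j, v j = none ∧ j ≤ k) :
    walkProb q (p + 1) v w' = walkProb q p v w' := by
  have flip_sites : (Finset.univ.filter fun i => v i = some p ∧ ∀ j, v j = none → i < j) = ∅ := by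
    simpa [Finset.filter_eq_empty_iff] using h
  simp [walkProb, flip_sites]

/-- The partial placement obtained from `w` by picking up the symbol at position `p` and closing
the gap. Every placement the walk reaches when about to scan position `p - 1` is of this form, so a
held symbol is encoded as sitting at position `p` of the state `w`. -/
def holdAt (p : ℕ) (w : Fin b → ℕ) : Fin b → Option ℕ :=
  fun k => if w k = p then none else if w k < p then some (w k) else some (w k - 1)

theorem holdAt_eq_none {k : Fin b} : holdAt p w k = none ↔ w k = p := by
  simp only [holdAt]
  split_ifs <;> simp_all

theorem holdAt_succ_eq_some {k : Fin b} : holdAt (p + 1) w k = some p ↔ w k = p := by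
  grind [holdAt]

theorem finalState_holdAt_zero (w : Fin b → ℕ) : finalState (holdAt 0 w) = w := by
  funext k
  grind [finalState, holdAt]

theorem holdAt_swap_comp (p : ℕ) (w : Fin b → ℕ) :
    holdAt p (swap p (p + 1) ∘ w) = holdAt (p + 1) w := by
  funext k
  grind [holdAt]

theorem tailsSwap_holdAt_succ (hw : Injective w) {x : Fin b} (hx : w x = p) :
    tailsSwap (holdAt (p + 1) w) x = holdAt p w := by
  funext k
  have hk : k = x ↔ w k = p := by rw [← hw.eq_iff, hx]
  grind [tailsSwap, holdAt]

theorem walkProb_holdAt_succ_of_lt (hw : Injective w)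
    (h : symbolAt w p < symbolAt w (p + 1)) :
    walkProb q (p + 1) (holdAt (p + 1) w) w' =
      q⁻¹ * walkProb q p (holdAt p (swap p (p + 1) ∘ w)) w' +
        (1 - q⁻¹) * walkProb q p (holdAt p w) w' := by
  obtain ⟨x, hx⟩ := WithTop.ne_top_iff_exists.1 h.ne_top
  have hxp : w x = p := apply_eq_of_symbolAt_eq_coe hx.symm
  rw [walkProb_succ_of_flip (k := x), holdAt_swap_comp, tailsSwap_holdAt_succ hw hxp]
  · intro j
    rw [holdAt_succ_eq_some, ← hw.eq_iff, hxp]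
  · simpa only [holdAt_eq_none] using coe_lt_symbolAt.1 (hx ▸ h)

theorem walkProb_holdAt_succ_of_le (h : symbolAt w (p + 1) ≤ symbolAt w p) :
    walkProb q (p + 1) (holdAt (p + 1) w) w' =
      walkProb q p (holdAt p (swap p (p + 1) ∘ w)) w' := by
  rw [holdAt_swap_comp]
  refine walkProb_succ_of_no_flip fun k hk => ?_
  by_contra! hlt
  have below : (k : WithTop (Fin b)) < symbolAt w (p + 1) :=
    coe_lt_symbolAt.2 fun j hj => hlt j (holdAt_eq_none.2 hj)
  exact (coe_lt_symbolAt.1 (below.trans_le h) k (holdAt_succ_eq_some.1 hk)).false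

theorem walkProb_holdAt_of_sup_lt {N : ℕ} (hN : Finset.univ.sup w < N) :
    walkProb q N (holdAt N w) w' = transProb q w w' := by
  induction N, hN using Nat.le_induction with
  | base =>
    have holdAt_eq : holdAt (Finset.univ.sup w + 1) w = fun k => some (w k) := by
      funext k
      have : w k ≤ Finset.univ.sup w := Finset.le_sup (Finset.mem_univ k)
      grind [holdAt]
    rw [Nat.succ_eq_add_one, holdAt_eq, transProb]
  | succ N hN ih =>
    have lt_of_sup_lt (k : Fin b) : w k < N := (Finset.le_sup (Finset.mem_univ k)).trans_lt hN
    have above_eq_top : symbolAt w N = ⊤ := symbolAt_eq_top.2 fun k => (lt_of_sup_lt k).ne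
    rw [walkProb_holdAt_succ_of_le (above_eq_top ▸ le_top), swap_comp_eq_self, ih]
    · exact fun k => (lt_of_sup_lt k).ne
    · exact fun k => (Nat.lt_succ_of_lt (lt_of_sup_lt k)).ne

end Walk

section Mass

variable {q : ℝ}

/-- The unnormalized stationary weight of `w` times the probability that the walk with the pointer
at `p`, holding the symbol at position `p` of `w`, terminates at `w'`. It interpolates between the
two sides of the stationarity equation as `p` runs from `0` to `∞`. -/
noncomputable def walkMass (q : ℝ) (p : ℕ) (w w' : Fin b → ℕ) : ℝ :=
  (q ^ flagInv w)⁻¹ * walkProb q p (holdAt p w) w'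

theorem walkMass_zero (w w' : Fin b → ℕ) :
    walkMass q 0 w w' = if w' = w then (q ^ flagInv w)⁻¹ else 0 := by
  simp [walkMass, walkProb, finalState_holdAt_zero]

theorem walkMass_balance_of_lt {w : Fin b → ℕ} (hw : Injective w) (w' : Fin b → ℕ) {p : ℕ}
    (h : symbolAt w p < symbolAt w (p + 1)) :
    walkMass q (p + 1) w w' + walkMass q (p + 1) (swap p (p + 1) ∘ w) w' =
      walkMass q p w w' + walkMass q p (swap p (p + 1) ∘ w) w' := by
  have descent : symbolAt (swap p (p + 1) ∘ w) (p + 1) ≤ symbolAt (swap p (p + 1) ∘ w) p := by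
    rw [symbolAt_swap_comp_left, symbolAt_swap_comp_right]
    exact h.le
  simp only [walkMass]
  rw [walkProb_holdAt_succ_of_lt hw h, walkProb_holdAt_succ_of_le descent, swap_comp_swap_comp,
    flagInv_swap_comp hw h]
  ring

theorem walkMass_balance {w : Fin b → ℕ} (hw : Injective w) (w' : Fin b → ℕ) (p : ℕ) :
    walkMass q (p + 1) w w' + walkMass q (p + 1) (swap p (p + 1) ∘ w) w' =
      walkMass q p w w' + walkMass q p (swap p (p + 1) ∘ w) w' := by
  rcases lt_trichotomy (symbolAt w p) (symbolAt w (p + 1)) with ascent | equal | descent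
  · exact walkMass_balance_of_lt hw w' ascent
  · have fixed := swap_comp_eq_self_of_symbolAt_eq p.succ_ne_self.symm equal
    have step : walkMass q (p + 1) w w' = walkMass q p w w' := by
      rw [walkMass, walkProb_holdAt_succ_of_le equal.ge, fixed, walkMass]
    rw [fixed, step]
  · have := walkMass_balance_of_lt (q := q) ((swap p (p + 1)).injective.comp hw) w' (p := p)
      (by rwa [symbolAt_swap_comp_left, symbolAt_swap_comp_right])
    rwa [swap_comp_swap_comp, add_comm, add_comm (walkMass q p _ w')] at this

theorem norm_inv_pow_flagInv_mul_le (hq : 1 ≤ q) (w : Fin b → ℕ) {P : ℝ}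
    (hP : P ∈ Set.Icc (0 : ℝ) 1) : ‖(q ^ flagInv w)⁻¹ * P‖ ≤ (q ^ flagInv w)⁻¹ := by
  have weight_nonneg : 0 ≤ (q ^ flagInv w)⁻¹ := by positivity
  rw [Real.norm_of_nonneg (mul_nonneg weight_nonneg hP.1)]
  exact mul_le_of_le_one_right weight_nonneg hP.2

theorem norm_walkMass_le (hq : 1 ≤ q) (p : ℕ) (w w' : Fin b → ℕ) :
    ‖walkMass q p w w'‖ ≤ (q ^ flagInv w)⁻¹ :=
  norm_inv_pow_flagInv_mul_le hq w (walkProb_mem_Icc hq _ _ _)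

theorem summable_walkMass (hq : 1 < q) (p : ℕ) (w' : Fin b → ℕ) :
    Summable fun w => walkMass q p w w' :=
  (summable_inv_pow_flagInv hq).of_norm_bounded fun w => norm_walkMass_le hq.le p w w'

theorem summable_inv_pow_flagInv_mul_transProb (hq : 1 < q) (w' : Fin b → ℕ) :
    Summable fun w : Fin b → ℕ => (q ^ flagInv w)⁻¹ * transProb q w w' :=
  (summable_inv_pow_flagInv hq).of_norm_bounded fun w =>
    norm_inv_pow_flagInv_mul_le hq.le w (walkProb_mem_Icc hq.le _ _ _)

theorem tsum_walkMass (hq : 1 < q) {w' : Fin b → ℕ} (hw' : Injective w') (p : ℕ) :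
    ∑' w : {w : Fin b → ℕ // Injective w}, walkMass q p w.1 w' = (q ^ flagInv w')⁻¹ := by
  induction p with
  | zero =>
    rw [tsum_eq_single ⟨w', hw'⟩ fun w hw => ?_, walkMass_zero, if_pos rfl]
    rw [walkMass_zero, if_neg fun h => hw (Subtype.ext h.symm)]
  | succ p ih =>
    have summable (r : ℕ) :
        Summable fun w : {w : Fin b → ℕ // Injective w} => walkMass q r w.1 w' :=
      (summable_walkMass hq r w').subtype _
    let exchange : Perm {w : Fin b → ℕ // Injective w} :=
      (arrowCongr (.refl _) (swap p (p + 1))).subtypeEquiv fun w =>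
        (comp_injective w (swap p (p + 1))).symm
    rw [← ih]
    exact tsum_eq_tsum_of_add_comp_perm_eq (summable (p + 1)) (summable p) exchange
      fun w => walkMass_balance w.2 w' p

theorem tendsto_walkMass_atTop (w w' : Fin b → ℕ) :
    Tendsto (fun p => walkMass q p w w') atTop (𝓝 ((q ^ flagInv w)⁻¹ * transProb q w w')) := by
  refine tendsto_const_nhds.congr' ?_
  filter_upwards [eventually_gt_atTop (Finset.univ.sup w)] with p hp
  rw [walkMass, walkProb_holdAt_of_sup_lt hp]

end Mass

end FlagJuggling

open FlagJuggling Filter Topology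

theorem stmt14 (b : ℕ) (hb : 1 ≤ b) (q : ℝ) (hq : 1 < q)
    (w' : Fin b → ℕ) (hw' : Function.Injective w') :
    HasSum (fun w : {w : Fin b → ℕ // Function.Injective w} =>
        ((1 - q⁻¹) ^ b * (q ^ flagInv w.1)⁻¹) * transProb q w.1 w')
      ((1 - q⁻¹) ^ b * (q ^ flagInv w')⁻¹) := by
  have limit : Tendsto
      (fun p => ∑' w : {w : Fin b → ℕ // Function.Injective w}, walkMass q p w.1 w') atTop
      (𝓝 (∑' w : {w : Fin b → ℕ // Function.Injective w},
        (q ^ flagInv w.1)⁻¹ * transProb q w.1 w')) :=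
    tendsto_tsum_of_dominated_convergence ((summable_inv_pow_flagInv hq).subtype _)
      (fun w => tendsto_walkMass_atTop w.1 w')
      (.of_forall fun p w => norm_walkMass_le hq.le p w.1 w')
  simp only [tsum_walkMass hq hw'] at limit
  have stationary := ((summable_inv_pow_flagInv_mul_transProb hq w').subtype
    {w | Function.Injective w}).hasSum
  simp only [mul_assoc]
  exact (tendsto_nhds_unique limit tendsto_const_nhds ▸ stationary).mul_left _
end

section
/- Fix natural numbers b ≤ n. For b-element subsets σ, τ of {0,...,n−1}, say there is a directed edge σ → τ if σ ⊆ {0} ∪ {t+1 : t ∈ τ} (this is the juggling digraph with b balls and all throws of height at most n). For a b-element subset σ of {0,...,n−1}, define r(σ) := {n−1−i : i ∈ {0,...,n−1} \ σ}, an (n−b)-element subset of {0,...,n−1}. Then for all b-element subsets σ, τ of {0,...,n−1}: σ → τ in the (b,n) digraph if and only if r(τ) → r(σ) in the (n−b,n) digraph. Hence r is an isomorphism from the (b,n) juggling digraph with arrows reversed to the (n−b,n) juggling digraph. -/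
/-- The edge relation of the juggling digraph: `σ → τ` iff `σ ⊆ {0} ∪ {t+1 : t ∈ τ}`,
i.e. the state `τ` can follow `σ` after one throw. -/
def jugglingEdge (σ τ : Finset ℕ) : Prop := σ ⊆ insert 0 (τ.image (· + 1))

/-- The reversal-complement of a state: `r(σ) = {n-1-i : i ∈ {0,...,n-1} \ σ}`. -/
def rcState (n : ℕ) (σ : Finset ℕ) : Finset ℕ :=
  (Finset.range n \ σ).image fun i => n - 1 - i

/-! An edge `σ → τ` says that `t + 1 ∈ σ` implies `t ∈ τ`. Contraposing, `t ∉ τ` implies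
`t + 1 ∉ σ`, and the reflection `i ↦ n - 1 - i` turns this step up into a step down: it is the edge
condition for the reflected complements. Hence `rcState n` reverses edges, and because it is an
involution on subsets of `{0, …, n - 1}`, it reflects them too. -/

open Finset

theorem jugglingEdge_iff {σ τ : Finset ℕ} :
    jugglingEdge σ τ ↔ ∀ t, t + 1 ∈ σ → t ∈ τ := by
  refine ⟨fun h t ht => by simpa using h ht, fun h x hx => ?_⟩
  cases x with
  | zero => exact mem_insert_self 0 _
  | succ t => exact mem_insert_of_mem (mem_image_of_mem _ (h t hx))

theorem jugglingEdge.mono_right {σ τ τ' : Finset ℕ} (h : jugglingEdge σ τ) (hτ : τ ⊆ τ') :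
    jugglingEdge σ τ' :=
  h.trans (insert_subset_insert 0 (image_subset_image hτ))

theorem mem_rcState {n : ℕ} {σ : Finset ℕ} {x : ℕ} :
    x ∈ rcState n σ ↔ x < n ∧ n - 1 - x ∉ σ := by
  simp only [rcState, mem_image, mem_sdiff, mem_range]
  constructor
  · rintro ⟨i, ⟨hi, hiσ⟩, rfl⟩
    exact ⟨by omega, by rwa [show n - 1 - (n - 1 - i) = i by omega]⟩
  · rintro ⟨hx, hxσ⟩
    exact ⟨n - 1 - x, ⟨by omega, hxσ⟩, by omega⟩

theorem rcState_subset_range (n : ℕ) (σ : Finset ℕ) : rcState n σ ⊆ range n :=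
  fun _ hx => mem_range.2 (mem_rcState.1 hx).1

theorem card_rcState {n : ℕ} {σ : Finset ℕ} (hσ : σ ⊆ range n) :
    (rcState n σ).card = n - σ.card := by
  have reflect_injOn : Set.InjOn (fun i => n - 1 - i) (range n \ σ : Finset ℕ) := by
    intro i hi j hj hij
    have hi_lt : i < n := mem_range.1 (mem_sdiff.1 hi).1
    have hj_lt : j < n := mem_range.1 (mem_sdiff.1 hj).1
    dsimp only at hij
    omega
  rw [rcState, card_image_of_injOn reflect_injOn, card_sdiff_of_subset hσ, card_range]

theorem rcState_rcState (n : ℕ) (σ : Finset ℕ) : rcState n (rcState n σ) = σ ∩ range n := by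
  ext x
  simp only [mem_rcState, mem_inter, mem_range, not_and, not_not]
  constructor
  · rintro ⟨hx, h⟩
    have reflect_mem : n - 1 - (n - 1 - x) ∈ σ := h (by omega)
    exact ⟨by rwa [show n - 1 - (n - 1 - x) = x by omega] at reflect_mem, hx⟩
  · rintro ⟨hxσ, hx⟩
    exact ⟨hx, fun _ => by rwa [show n - 1 - (n - 1 - x) = x by omega]⟩

theorem jugglingEdge.rcState {σ τ : Finset ℕ} (h : jugglingEdge σ τ) (n : ℕ) :
    jugglingEdge (rcState n τ) (rcState n σ) := by
  refine jugglingEdge_iff.2 fun t ht => mem_rcState.2 ?_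
  obtain ⟨ht_lt, htτ⟩ := mem_rcState.1 ht
  refine ⟨by omega, fun htσ => htτ (jugglingEdge_iff.1 h _ ?_)⟩
  rwa [show n - 1 - (t + 1) + 1 = n - 1 - t by omega]

theorem jugglingEdge_rcState_iff {n : ℕ} {σ τ : Finset ℕ} (hσ : σ ⊆ range n) :
    jugglingEdge (rcState n τ) (rcState n σ) ↔ jugglingEdge σ τ := by
  refine ⟨fun h => ?_, fun h => h.rcState n⟩
  have hrr : jugglingEdge (rcState n (rcState n σ)) (rcState n (rcState n τ)) := h.rcState n
  rw [rcState_rcState, rcState_rcState, inter_eq_left.2 hσ] at hrr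
  exact hrr.mono_right inter_subset_left

theorem stmt18_general (n : ℕ) (σ τ : Finset ℕ) (hσ : σ ⊆ range n) :
    ((rcState n σ).card = n - σ.card ∧ rcState n σ ⊆ range n) ∧
    (jugglingEdge σ τ ↔ jugglingEdge (rcState n τ) (rcState n σ)) :=
  ⟨⟨card_rcState hσ, rcState_subset_range n σ⟩, (jugglingEdge_rcState_iff hσ).symm⟩

theorem stmt18 (b n : ℕ) (hbn : b ≤ n) (σ τ : Finset ℕ)
    (hσ : σ ⊆ Finset.range n) (hσc : σ.card = b)
    (hτ : τ ⊆ Finset.range n) (hτc : τ.card = b) :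
    ((rcState n σ).card = n - b ∧ rcState n σ ⊆ Finset.range n) ∧
    (jugglingEdge σ τ ↔ jugglingEdge (rcState n τ) (rcState n σ)) :=
  hσc ▸ stmt18_general n σ τ hσ
end
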